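/- arXiv:1103.5667 — 2 statements merged into one kernel-verified Lean document; each statement's English description precedes it below -/
import Mathlib

section
/- Let n ∈ ℕ, q ∈ (0,∞], τ ∈ [0,∞), δ ∈ (nτ,∞) and p ∈ (0,∞]. Then there exists a constant C > 0 such that for every family {g_m}_{m∈ℤ} of measurable functions g_m : ℝⁿ → [0,∞], the functions G_j := Σ_{m∈ℤ} 2^{-|m-j|δ} g_m (j ∈ ℤ) satisfy ‖{G_j}_{j∈ℤ} | L^p_τ(ℓ^q(ℝⁿ,ℤ))‖ ≤ C ‖{g_m}_{m∈ℤ} | L^p_τ(ℓ^q(ℝⁿ,ℤ))‖. -/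
/-!
Substituting `m = j + i` writes `G_j = ∑ i, 2^(-|i|δ) g_{j+i}`, a weighted sum of translates of the
sequence `g`.

* Each translate satisfies `‖(g_{j+i})_j‖ ≤ 2^(|i|nτ) ‖g‖` (`shift_bound`): the sum over levels
  `≥ j_P` of the translate is at most the sum over levels `≥ j_P - |i|` of `g`, the cube `P` lies in
  a dyadic cube of level `j_P - |i|`, and the factor `|P|^(-τ)` changes by `2^(|i|nτ)`.
* The translates are put together without any (quasi-)triangle inequality, hence uniformly in
  `p, q ∈ (0,∞]`.  An exponential weight `w_i = 2^(ε|i|)` bounds sums by suprema,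
  `(∑ i, a_i ^ s)^(1/s) ≤ C * ⨆ i, w_i * a_i` (`tsum_rpow_le_iSup`), and as a consequence both the
  `ℓ^q` and the `L^p` quasi-norm of `⨆ i, f_i` are at most a constant times the supremum of
  `w_i` times the quasi-norms of the `f_i` (`lqSumFrom_iSup_le`, `lpIntOn_iSup_le`).

This device is used three times (sum over `i`, `ℓ^q`, `L^p`), so the weights lose `2^(3ε|i|)`, which
is absorbed by the decay `2^(-|i|(δ - nτ))` on choosing `ε = (δ - nτ)/3`.
-/

open MeasureTheory ENNReal Set

noncomputable section

abbrev En (n : ℕ) := EuclideanSpace ℝ (Fin n)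

def dyadicCube (n : ℕ) (j : ℤ) (k : Fin n → ℤ) : Set (En n) :=
  {x | ∀ i, (2:ℝ) ^ (-j) * (k i : ℝ) ≤ x i ∧ x i < (2:ℝ) ^ (-j) * ((k i : ℝ) + 1)}

def lpIntOn {α : Type*} [MeasurableSpace α] (μ : Measure α) (p : ℝ≥0∞) (A : Set α)
    (f : α → ℝ≥0∞) : ℝ≥0∞ :=
  if p = ∞ then essSup f (μ.restrict A)
  else (∫⁻ x in A, f x ^ p.toReal ∂μ) ^ (1 / p.toReal)

def lqSumFrom (q : ℝ≥0∞) (j : ℤ) (F : ℤ → ℝ≥0∞) : ℝ≥0∞ :=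
  if q = ∞ then ⨆ (l : ℤ) (_ : j ≤ l), F l
  else (∑' l : {l : ℤ // j ≤ l}, F (l : ℤ) ^ q.toReal) ^ (1 / q.toReal)

/-- The mixed quasi-norm ‖·‖_{L^p_τ(ℓ^q(ℝⁿ,ℤ))}. -/
def lpTauLqNorm (n : ℕ) (p q : ℝ≥0∞) (τ : ℝ)
    (g : ℤ → En n → ℝ≥0∞) : ℝ≥0∞ :=
  ⨆ (j : ℤ) (k : Fin n → ℤ),
    (2 : ℝ≥0∞) ^ ((j : ℝ) * n * τ) *
      lpIntOn volume p (dyadicCube n j k) (fun x => lqSumFrom q j (fun l => g l x))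

/-! ### Exponential weights -/

/-- The exponential weight `2^(ε|i|)`. -/
def expWeight (ε : ℝ) (i : ℤ) : ℝ≥0∞ := (2 : ℝ≥0∞) ^ (ε * |(i : ℝ)|)

lemma expWeight_ne_top (ε : ℝ) (i : ℤ) : expWeight ε i ≠ ∞ :=
  ENNReal.rpow_ne_top_of_ne_zero (by simp) (by simp)

lemma expWeight_mul (ε η : ℝ) (i : ℤ) :
    expWeight ε i * expWeight η i = expWeight (ε + η) i := by
  unfold expWeight
  rw [← ENNReal.rpow_add _ _ (by simp) (by simp), add_mul]

lemma one_le_expWeight {ε : ℝ} (hε : 0 ≤ ε) (i : ℤ) : 1 ≤ expWeight ε i := by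
  rw [expWeight, ← ENNReal.rpow_zero (x := 2)]
  exact ENNReal.rpow_le_rpow_of_exponent_le (by simp) (by positivity)

lemma expWeight_zero (i : ℤ) : expWeight 0 i = 1 := by simp [expWeight]

lemma tsum_expWeight_neg_lt_top {s : ℝ} (hs : 0 < s) : ∑' i : ℤ, expWeight (-s) i < ∞ := by
  have hr : (2 : ℝ≥0∞) ^ (-s) < 1 := ENNReal.rpow_lt_one_of_one_lt_of_neg (by simp) (by linarith)
  have hgeo : ∑' k : ℕ, ((2 : ℝ≥0∞) ^ (-s)) ^ k < ∞ := by
    rw [ENNReal.tsum_geometric, ENNReal.inv_lt_top]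
    exact tsub_pos_of_lt hr
  have hnat (k : ℕ) : (2 : ℝ≥0∞) ^ (-s * (k : ℝ)) = ((2 : ℝ≥0∞) ^ (-s)) ^ k := by
    rw [ENNReal.rpow_mul, ENNReal.rpow_natCast]
  -- each value of `|i|` is attained at most twice
  calc ∑' i : ℤ, expWeight (-s) i
      ≤ ∑' b : ℕ ⊕ ℕ, expWeight (-s) (Sum.elim (fun k : ℕ => (k : ℤ)) (fun k : ℕ => -(k : ℤ)) b) := by
        refine ENNReal.tsum_le_tsum_comp_of_surjective ?_ _
        intro i
        rcases Int.eq_nat_or_neg i with ⟨k, rfl | rfl⟩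
        · exact ⟨Sum.inl k, rfl⟩
        · exact ⟨Sum.inr k, rfl⟩
    _ = ∑' k : ℕ, ((2 : ℝ≥0∞) ^ (-s)) ^ k + ∑' k : ℕ, ((2 : ℝ≥0∞) ^ (-s)) ^ k := by
        rw [ENNReal.summable.tsum_sum ENNReal.summable]
        simp only [expWeight, Sum.elim_inl, Sum.elim_inr, Int.cast_neg, Int.cast_natCast, abs_neg,
          Nat.abs_cast, hnat]
    _ < ∞ := ENNReal.add_lt_top.2 ⟨hgeo, hgeo⟩

/-- An `ℓ^s` quasi-norm over `ℤ` is dominated by an exponentially weighted supremum. -/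
lemma tsum_rpow_le_iSup {ε s : ℝ} (hs : 0 < s) (a : ℤ → ℝ≥0∞) :
    (∑' i, a i ^ s) ^ (1 / s) ≤
      (∑' i, expWeight (-(ε * s)) i) ^ (1 / s) * ⨆ i, expWeight ε i * a i := by
  set M := ⨆ i, expWeight ε i * a i with hM
  have key (i : ℤ) : a i ^ s ≤ expWeight (-(ε * s)) i * M ^ s := by
    have h1 : expWeight ε i * a i ≤ M := le_iSup (fun i => expWeight ε i * a i) i
    have h2 : expWeight (-(ε * s)) i * expWeight ε i ^ s = 1 := by
      have : expWeight ε i ^ s = expWeight (ε * s) i := by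
        unfold expWeight
        rw [← ENNReal.rpow_mul]; ring_nf
      rw [this, expWeight_mul, neg_add_cancel, expWeight_zero]
    calc a i ^ s = expWeight (-(ε * s)) i * (expWeight ε i * a i) ^ s := by
          rw [ENNReal.mul_rpow_of_nonneg _ _ hs.le, ← mul_assoc, h2, one_mul]
      _ ≤ _ := by gcongr
  calc (∑' i, a i ^ s) ^ (1 / s) ≤ (∑' i, expWeight (-(ε * s)) i * M ^ s) ^ (1 / s) := by
        gcongr with i; exact key i
    _ = _ := by
        rw [ENNReal.tsum_mul_right, ENNReal.mul_rpow_of_nonneg _ _ (by positivity),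
          ← ENNReal.rpow_mul, mul_one_div_cancel hs.ne', ENNReal.rpow_one]

/-- The constant in `tsum_rpow_le_iSup`. -/
def supConst (ε s : ℝ) : ℝ≥0∞ := (∑' i, expWeight (-(ε * s)) i) ^ (1 / s)

lemma supConst_ne_top {ε s : ℝ} (hε : 0 < ε) (hs : 0 < s) : supConst ε s ≠ ∞ :=
  ENNReal.rpow_ne_top_of_nonneg (by positivity)
    (tsum_expWeight_neg_lt_top (mul_pos hε hs)).ne

lemma tsum_le_iSup (ε : ℝ) (a : ℤ → ℝ≥0∞) :
    ∑' i, a i ≤ supConst ε 1 * ⨆ i, expWeight ε i * a i := by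
  simpa [supConst] using tsum_rpow_le_iSup (ε := ε) one_pos a

lemma iSup_rpow_le_tsum {s : ℝ} (hs : 0 < s) (a : ℤ → ℝ≥0∞) :
    (⨆ i, a i) ^ s ≤ ∑' i, a i ^ s := by
  rw [← ENNReal.orderIsoRpow_apply s hs, OrderIso.map_iSup]
  exact iSup_le fun i => ENNReal.le_tsum i

/-! ### The `ℓ^q` quasi-norm -/

lemma lqSumFrom_mono (q : ℝ≥0∞) (j : ℤ) {F H : ℤ → ℝ≥0∞} (h : ∀ l, F l ≤ H l) :
    lqSumFrom q j F ≤ lqSumFrom q j H := by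
  unfold lqSumFrom
  split_ifs
  · exact iSup₂_mono fun l _ => h l
  · gcongr with l; exact h l

lemma lqSumFrom_const_mul {q : ℝ≥0∞} (hq : 0 < q) (j : ℤ) (c : ℝ≥0∞) (F : ℤ → ℝ≥0∞) :
    lqSumFrom q j (fun l => c * F l) = c * lqSumFrom q j F := by
  unfold lqSumFrom
  split_ifs with h
  · simp [ENNReal.mul_iSup]
  · have hs : 0 < q.toReal := ENNReal.toReal_pos hq.ne' h
    simp_rw [ENNReal.mul_rpow_of_nonneg _ _ hs.le]
    rw [ENNReal.tsum_mul_left, ENNReal.mul_rpow_of_nonneg _ _ (by positivity),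
      ← ENNReal.rpow_mul, mul_one_div_cancel hs.ne', ENNReal.rpow_one]

lemma measurable_lqSumFrom {α : Type*} [MeasurableSpace α] (q : ℝ≥0∞) (j : ℤ)
    {f : ℤ → α → ℝ≥0∞} (hf : ∀ l, Measurable (f l)) :
    Measurable fun x => lqSumFrom q j (fun l => f l x) := by
  unfold lqSumFrom
  split_ifs
  · exact Measurable.iSup fun l => Measurable.iSup fun _ => hf l
  · exact (Measurable.tsum fun l : {l : ℤ // j ≤ l} => (hf l).pow_const q.toReal).pow_const _

lemma lqSumFrom_iSup_le {q : ℝ≥0∞} (hq : 0 < q) {ε : ℝ} (hε : 0 < ε) :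
    ∃ C : ℝ≥0∞, C ≠ ∞ ∧ ∀ (j : ℤ) (f : ℤ → ℤ → ℝ≥0∞),
      lqSumFrom q j (fun l => ⨆ i, f i l) ≤ C * ⨆ i, expWeight ε i * lqSumFrom q j (f i) := by
  by_cases h : q = ∞
  · refine ⟨1, by simp, fun j f => ?_⟩
    simp only [lqSumFrom, h, if_true, one_mul]
    refine iSup₂_le fun l hl => iSup_mono fun i => ?_
    have hw : 1 ≤ expWeight ε i := one_le_expWeight hε.le i
    calc f i l ≤ 1 * ⨆ (l : ℤ) (_ : j ≤ l), f i l := by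
          rw [one_mul]; exact le_iSup₂ (f := fun (l : ℤ) (_ : j ≤ l) => f i l) l hl
      _ ≤ _ := by gcongr
  · have hs : 0 < q.toReal := ENNReal.toReal_pos hq.ne' h
    refine ⟨supConst ε q.toReal, supConst_ne_top hε hs, fun j f => ?_⟩
    refine le_trans ?_ (tsum_rpow_le_iSup hs fun i => lqSumFrom q j (f i))
    simp only [lqSumFrom, h, if_false]
    simp_rw [← ENNReal.rpow_mul, one_div_mul_cancel hs.ne', ENNReal.rpow_one]
    rw [ENNReal.tsum_comm]
    gcongr with l
    exact iSup_rpow_le_tsum hs _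

/-! ### The `L^p` quasi-norm -/

lemma lpIntOn_mono {α : Type*} [MeasurableSpace α] (μ : Measure α) (p : ℝ≥0∞) {A B : Set α}
    (hAB : A ⊆ B) {f h : α → ℝ≥0∞} (hfh : ∀ x, f x ≤ h x) :
    lpIntOn μ p A f ≤ lpIntOn μ p B h := by
  unfold lpIntOn
  split_ifs
  · exact (essSup_mono_ae (Filter.Eventually.of_forall hfh)).trans
      (essSup_mono_measure' (Measure.restrict_mono_set μ hAB))
  · gcongr with x
    exact hfh x

lemma lpIntOn_const_mul {α : Type*} [MeasurableSpace α] (μ : Measure α) {p : ℝ≥0∞} (hp : 0 < p)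
    (A : Set α) {c : ℝ≥0∞} (hc : c ≠ ∞) (f : α → ℝ≥0∞) :
    lpIntOn μ p A (fun x => c * f x) = c * lpIntOn μ p A f := by
  unfold lpIntOn
  split_ifs with h
  · exact ENNReal.essSup_const_mul
  · have hs : 0 < p.toReal := ENNReal.toReal_pos hp.ne' h
    simp_rw [ENNReal.mul_rpow_of_nonneg _ _ hs.le]
    rw [lintegral_const_mul' _ _ (ENNReal.rpow_ne_top_of_nonneg hs.le hc),
      ENNReal.mul_rpow_of_nonneg _ _ (by positivity),
      ← ENNReal.rpow_mul, mul_one_div_cancel hs.ne', ENNReal.rpow_one]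

lemma lpIntOn_iSup_le {α : Type*} [MeasurableSpace α] (μ : Measure α) {p : ℝ≥0∞} (hp : 0 < p)
    {ε : ℝ} (hε : 0 < ε) :
    ∃ C : ℝ≥0∞, C ≠ ∞ ∧ ∀ (A : Set α) (f : ℤ → α → ℝ≥0∞), (∀ i, Measurable (f i)) →
      lpIntOn μ p A (fun x => ⨆ i, f i x) ≤ C * ⨆ i, expWeight ε i * lpIntOn μ p A (f i) := by
  by_cases h : p = ∞
  · refine ⟨1, by simp, fun A f _ => ?_⟩
    simp only [lpIntOn, h, if_true, one_mul]
    refine essSup_le_of_ae_le _ ?_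
    have hae : ∀ᵐ x ∂μ.restrict A, ∀ i, f i x ≤ essSup (f i) (μ.restrict A) :=
      ae_all_iff.2 fun i => ENNReal.ae_le_essSup (f i)
    filter_upwards [hae] with x hx
    refine iSup_mono fun i => ?_
    have hw : 1 ≤ expWeight ε i := one_le_expWeight hε.le i
    calc f i x ≤ 1 * essSup (f i) (μ.restrict A) := by rw [one_mul]; exact hx i
      _ ≤ _ := by gcongr
  · have hs : 0 < p.toReal := ENNReal.toReal_pos hp.ne' h
    refine ⟨supConst ε p.toReal, supConst_ne_top hε hs, fun A f hf => ?_⟩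
    refine le_trans ?_ (tsum_rpow_le_iSup hs fun i => lpIntOn μ p A (f i))
    simp only [lpIntOn, h, if_false]
    simp_rw [← ENNReal.rpow_mul, one_div_mul_cancel hs.ne', ENNReal.rpow_one]
    rw [← lintegral_tsum fun i => ((hf i).pow_const _).aemeasurable]
    gcongr with x
    exact iSup_rpow_le_tsum hs _

/-! ### Translates of a sequence -/

/-- The levels `≥ j` of a translate of `F` by `i` are among the levels `≥ j - |i|` of `F`. -/
lemma lqSumFrom_shift_le (q : ℝ≥0∞) (j i : ℤ) (F : ℤ → ℝ≥0∞) :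
    lqSumFrom q j (fun l => F (l + i)) ≤ lqSumFrom q (j - |i|) F := by
  have hi : -|i| ≤ i := neg_abs_le i
  unfold lqSumFrom
  split_ifs
  · exact iSup₂_le fun l hl =>
      le_iSup₂ (f := fun (l : ℤ) (_ : j - |i| ≤ l) => F l) (l + i) (by linarith)
  · gcongr
    let φ : {l : ℤ // j ≤ l} → {l : ℤ // j - |i| ≤ l} :=
      fun l => ⟨l + i, by have := l.2; linarith⟩
    have hφ : Function.Injective φ := by
      intro a b hab
      have := congrArg Subtype.val hab
      exact Subtype.ext (by simpa [φ] using this)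
    exact ENNReal.tsum_comp_le_tsum_of_injective hφ fun l => F l ^ q.toReal

lemma dyadicCube_subset_ancestor (n : ℕ) (j : ℤ) (k : Fin n → ℤ) (a : ℕ) :
    dyadicCube n j k ⊆ dyadicCube n (j - a) (fun i => k i / 2 ^ a) := by
  intro x hx i
  obtain ⟨h1, h2⟩ := hx i
  have hpow : (2 : ℝ) ^ (-(j - (a : ℤ))) = 2 ^ (-j) * 2 ^ a := by
    rw [show -(j - (a : ℤ)) = -j + a by ring, zpow_add₀ (by norm_num), zpow_natCast]
  have hj : (0 : ℝ) < 2 ^ (-j) := by positivity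
  have e1 : (2 : ℤ) ^ a * (k i / 2 ^ a) ≤ k i := Int.mul_ediv_self_le (by positivity)
  have e2 : k i + 1 ≤ 2 ^ a * (k i / 2 ^ a + 1) := by
    have := Int.lt_mul_ediv_self_add (x := k i) (k := 2 ^ a) (by positivity)
    linarith
  have e1' : (2 : ℝ) ^ a * ((k i / 2 ^ a : ℤ) : ℝ) ≤ k i := by exact_mod_cast e1
  have e2' : (k i : ℝ) + 1 ≤ 2 ^ a * (((k i / 2 ^ a : ℤ) : ℝ) + 1) := by exact_mod_cast e2
  rw [hpow, mul_assoc, mul_assoc]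
  exact ⟨(mul_le_mul_of_nonneg_left e1' hj.le).trans h1,
    h2.trans_le (mul_le_mul_of_nonneg_left e2' hj.le)⟩

/-- Translating a sequence by `i` increases its quasi-norm at most by the factor `2^(|i|nτ)`. -/
lemma shift_bound (n : ℕ) (p q : ℝ≥0∞) (τ : ℝ) (g : ℤ → En n → ℝ≥0∞) (i j : ℤ)
    (k : Fin n → ℤ) :
    (2 : ℝ≥0∞) ^ ((j : ℝ) * n * τ) *
      lpIntOn volume p (dyadicCube n j k) (fun x => lqSumFrom q j (fun l => g (l + i) x)) ≤
    expWeight (n * τ) i * lpTauLqNorm n p q τ g := by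
  have hab : ((i.natAbs : ℕ) : ℤ) = |i| := Int.natCast_natAbs i
  have hsub := dyadicCube_subset_ancestor n j k i.natAbs
  rw [hab] at hsub
  have hfac : (2 : ℝ≥0∞) ^ ((j : ℝ) * n * τ) =
      expWeight (n * τ) i * (2 : ℝ≥0∞) ^ (((j - |i| : ℤ) : ℝ) * n * τ) := by
    unfold expWeight
    rw [← ENNReal.rpow_add _ _ (by simp) (by simp)]
    congr 1
    push_cast
    ring
  rw [hfac, mul_assoc]
  gcongr
  refine le_trans ?_ (le_iSup₂ (f := fun (j : ℤ) (k : Fin n → ℤ) =>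
    (2 : ℝ≥0∞) ^ ((j : ℝ) * n * τ) * lpIntOn volume p (dyadicCube n j k)
      (fun x => lqSumFrom q j (fun l => g l x))) (j - |i|) fun m => k m / 2 ^ i.natAbs)
  gcongr
  exact lpIntOn_mono _ _ hsub fun x => lqSumFrom_shift_le q j i fun l => g l x

/-! ### The weighted sum of translates -/

theorem stmt1 (n : ℕ) (hn : 0 < n) (p q : ℝ≥0∞) (hp0 : 0 < p) (hq : 0 < q)
    (τ δ : ℝ) (hτ : 0 ≤ τ) (hδ : (n : ℝ) * τ < δ) :
    ∃ C : ℝ≥0∞, 0 < C ∧ C < ∞ ∧ ∀ g : ℤ → En n → ℝ≥0∞,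
      (∀ m, Measurable (g m)) →
      lpTauLqNorm n p q τ
          (fun j x => ∑' m : ℤ, (2:ℝ≥0∞) ^ (-(|(m:ℝ) - (j:ℝ)|) * δ) * g m x)
        ≤ C * lpTauLqNorm n p q τ g := by
  obtain ⟨ε, hε, hεδ⟩ : ∃ ε : ℝ, 0 < ε ∧ ε + (ε + (ε + -δ)) + n * τ = 0 :=
    ⟨(δ - n * τ) / 3, by linarith, by ring⟩
  obtain ⟨Cq, hCq, hlq⟩ := lqSumFrom_iSup_le hq hε
  obtain ⟨Cp, hCp, hlp⟩ := lpIntOn_iSup_le (volume : Measure (En n)) hp0 hε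
  set C₁ := supConst ε 1
  have hC₁ : C₁ ≠ ∞ := supConst_ne_top hε one_pos
  have hC : C₁ * Cq * Cp ≠ ∞ := ENNReal.mul_ne_top (ENNReal.mul_ne_top hC₁ hCq) hCp
  -- the summand `1` makes the constant positive
  refine ⟨C₁ * Cq * Cp + 1, by positivity, ENNReal.add_lt_top.2 ⟨hC.lt_top, by simp⟩,
    fun g hg => ?_⟩
  refine le_trans ?_ (mul_le_mul_left le_self_add _)
  unfold lpTauLqNorm
  refine iSup₂_le fun j k => ?_
  change _ ≤ _ * lpTauLqNorm n p q τ g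
  set Q := dyadicCube n j k
  -- the `ℓ^q` quasi-norm of the translate by `i`
  let N : ℤ → En n → ℝ≥0∞ := fun i x => lqSumFrom q j (fun l => g (l + i) x)
  have hN (i : ℤ) : Measurable (N i) := measurable_lqSumFrom q j fun l => hg (l + i)
  have hsum (l : ℤ) (x : En n) :
      ∑' m : ℤ, (2:ℝ≥0∞) ^ (-(|(m:ℝ) - (l:ℝ)|) * δ) * g m x ≤
        C₁ * ⨆ i, expWeight (ε + -δ) i * g (l + i) x := by
    rw [← (Equiv.addLeft l).tsum_eq]
    refine (tsum_le_iSup ε _).trans_eq ?_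
    congr 1
    refine iSup_congr fun i => ?_
    rw [← expWeight_mul, mul_assoc]
    congr 2
    simp only [Equiv.coe_addLeft, expWeight]
    congr 1
    push_cast
    rw [add_sub_cancel_left]
    ring
  have hpt (x : En n) :
      lqSumFrom q j (fun l => ∑' m : ℤ, (2:ℝ≥0∞) ^ (-(|(m:ℝ) - (l:ℝ)|) * δ) * g m x) ≤
        C₁ * Cq * ⨆ i, expWeight (ε + (ε + -δ)) i * N i x := by
    refine (lqSumFrom_mono q j fun l => hsum l x).trans ?_
    rw [lqSumFrom_const_mul hq, mul_assoc]
    gcongr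
    refine (hlq j fun i l => expWeight (ε + -δ) i * g (l + i) x).trans_eq ?_
    congr 1
    refine iSup_congr fun i => ?_
    rw [lqSumFrom_const_mul hq, ← mul_assoc, expWeight_mul]
  have hint : lpIntOn volume p Q (fun x => lqSumFrom q j
        (fun l => ∑' m : ℤ, (2:ℝ≥0∞) ^ (-(|(m:ℝ) - (l:ℝ)|) * δ) * g m x)) ≤
      C₁ * Cq * Cp * ⨆ i, expWeight (ε + (ε + (ε + -δ))) i * lpIntOn volume p Q (N i) := by
    refine (lpIntOn_mono volume p subset_rfl hpt).trans ?_
    rw [lpIntOn_const_mul _ hp0 _ (ENNReal.mul_ne_top hC₁ hCq), mul_assoc (C₁ * Cq)]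
    gcongr
    refine (hlp Q (fun i x => expWeight (ε + (ε + -δ)) i * N i x)
      fun i => (hN i).const_mul _).trans_eq ?_
    congr 1
    refine iSup_congr fun i => ?_
    rw [lpIntOn_const_mul _ hp0 _ (expWeight_ne_top _ _), ← mul_assoc, expWeight_mul]
  refine (mul_le_mul_right hint _).trans ?_
  rw [mul_left_comm]
  gcongr
  rw [ENNReal.mul_iSup]
  refine iSup_le fun i => ?_
  rw [mul_left_comm]
  refine (mul_le_mul_right (shift_bound n p q τ g i j k) _).trans_eq ?_
  rw [← mul_assoc, expWeight_mul, hεδ, expWeight_zero, one_mul]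
end
end

section
/- Let n ∈ ℕ, p ∈ (1,∞), q ∈ [1,∞), τ ∈ [0, 1/(p∨q)'] and δ ∈ (nτ,∞). Then there exists a constant C > 0 such that for every family {g_m}_{m∈ℤ} of measurable functions g_m : ℝⁿ → [0,∞], the functions G_j := Σ_{m∈ℤ} 2^{-|m-j|δ} g_m (j ∈ ℤ) satisfy ‖{G_j}_{j∈ℤ}‖_{~ℓ^q(L^p_τ(ℝⁿ,ℤ))} ≤ C ‖{g_m}_{m∈ℤ}‖_{~ℓ^q(L^p_τ(ℝⁿ,ℤ))}. -/
/-!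
Let `e` be the conjugate exponent of `p ∨ q` and `d = nτe`, so `d ≤ n`. Fix `ε` with `nτ < ε < δ`. Given a weight `ω`
admissible for `{g_m}`, use for `{G_j}` the smeared weight
`ω̂(x, t) = sup_{k ∈ ℤ} c 2^{-|k|ε} ω(x, 2^k t)`.

*Norm estimate.* Since `ω̂(x, 2^{-j}) ≥ c 2^{-|m-j|ε} ω(x, 2^{-m})`, the quotient
`G_j / ω̂(·, 2^{-j})` is at most `c⁻¹ Σ_m 2^{-|m-j|(δ-ε)} g_m / ω(·, 2^{-m})`
(`tsum_mul_inv_smearedWeight_le`), a discrete convolution with an `ℓ¹` sequence. Minkowski's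
inequality in `L^p` and then in `ℓ^q` bounds it (`lq_Lp_convolution_le`).

*Admissibility.* The nontangential maximal function of `ω̂` is at most
`sup_k c 2^{-|k|ε} N_{2^{|k|}} ω`, where `N_β` has aperture `β`. The capacity is countably
subadditive and changing the aperture costs a factor `2 (5β)^d`
(`hausdorffCapacity_ntMaximal_le`), so the Choquet integral is at most
`c^e Σ_k 2 · 5^d 2^{-|k|(εe - d)}`. The series converges because `ε > nτ`, and `c` is chosen so that
the product equals `1`.

*Change of aperture.* Cover `{Nω > a}` by balls `B(x_i, r_i)`. If `N_β ω(x) > a`, there is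
`(y, t)` with `ω(y, t) > a` and `|x - y| < βt`, and then `B(y, t) ⊆ {Nω > a}`. If `B(y, t)` meets
some `B(x_i, r_i)` with `r_i > t`, then `x ∈ B(x_i, 5β r_i)`. Otherwise `B(y, t)` is covered by
balls of radius at most `t`. Vitali's lemma selects disjoint balls `B(y_b, t_b)` among these such
that `x ∈ B(y_b, 5β t_b)` for some `b`, and `Σ_b t_b^d ≤ Σ_i r_i^d` by comparing Lebesgue measures
(`tsum_disjoint_balls_le`); this is where `d ≤ n` enters.
-/


open MeasureTheory ENNReal NNReal Set

noncomputable section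

/-- The `d`-dimensional Hausdorff capacity on `ℝⁿ`: the infimum of `Σ_j r_j^d` over all
countable coverings of `E` by open balls `B(x_j, r_j)`. -/
def hausdorffCapacity (n : ℕ) (d : ℝ) (E : Set (En n)) : ℝ≥0∞ :=
  ⨅ (c : ℕ → En n × ℝ≥0) (_ : E ⊆ ⋃ i, Metric.ball (c i).1 ((c i).2 : ℝ)),
    ∑' i, ((c i).2 : ℝ≥0∞) ^ d

/-- The Choquet integral of `f : ℝⁿ → [0,∞]` against the Hausdorff capacity `H^d`:
`∫₀^∞ H^d({x : f x > λ}) dλ`. -/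
def choquetIntegral (n : ℕ) (d : ℝ) (f : En n → ℝ≥0∞) : ℝ≥0∞ :=
  ∫⁻ lam in Ioi (0:ℝ), hausdorffCapacity n d {x | ENNReal.ofReal lam < f x}

/-- The nontangential maximal function with aperture `β`:
`N_β ω (x) = sup { ω(y,t) : |y - x| < β t }`. -/
def ntMaximal (n : ℕ) (β : ℝ) (ω : En n → ℝ → ℝ≥0∞) (x : En n) : ℝ≥0∞ :=
  ⨆ (y : En n) (t : ℝ) (_ : dist y x < β * t), ω y t

/-- The conjugate exponent `m' = m/(m-1)`. -/
def conjExp (m : ℝ) : ℝ := m / (m - 1)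

/-- A weight `ω` on `ℝⁿ × (0,∞)` is admissible (for parameters `n, τ` and exponent `e`)
if `∫_{ℝⁿ} (Nω)^e dH^{nτe} ≤ 1`. -/
def isAdmissibleWeight (n : ℕ) (τ e : ℝ) (ω : En n → ℝ → ℝ≥0∞) : Prop :=
  choquetIntegral n (n * τ * e) (fun x => ntMaximal n 1 ω x ^ e) ≤ 1

/-- The quasi-norm `‖·‖_{~ℓ^q(L^p_τ(ℝⁿ,ℤ))}`. -/
def tildeLqLpNorm (n : ℕ) (p q τ : ℝ) (g : ℤ → En n → ℝ≥0∞) : ℝ≥0∞ :=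
  ⨅ (ω : En n → ℝ → ℝ≥0∞) (_ : Measurable (Function.uncurry ω))
    (_ : isAdmissibleWeight n τ (conjExp (max p q)) ω)
    (_ : ∀ (j : ℤ) (x : En n), ω x ((2:ℝ) ^ (-j)) = 0 → g j x = 0),
    (∑' j : ℤ,
        (∫⁻ x, g j x ^ p * (ω x ((2:ℝ) ^ (-j))) ^ (-p)) ^ (q / p)) ^ (1 / q)

/-! ### Minkowski and Young inequalities -/

theorem lintegral_Lp_finset_sum_le {α ι : Type*} [MeasurableSpace α] {μ : Measure α} {r : ℝ}
    (hr : 1 ≤ r) (F : ι → α → ℝ≥0∞) (hF : ∀ i, Measurable (F i)) (s : Finset ι) :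
    (∫⁻ a, (∑ i ∈ s, F i a) ^ r ∂μ) ^ (1 / r) ≤ ∑ i ∈ s, (∫⁻ a, F i a ^ r ∂μ) ^ (1 / r) := by
  have hr0 : 0 < r := by linarith
  classical
  induction s using Finset.induction_on with
  | empty => simp [hr0]
  | insert i s hi ih =>
    simp only [Finset.sum_insert hi]
    refine (ENNReal.lintegral_Lp_add_le (μ := μ) (f := F i) (g := fun a => ∑ i ∈ s, F i a)
      (hF i).aemeasurable (Finset.measurable_sum s fun i _ => hF i).aemeasurable hr).trans ?_
    gcongr

/-- Minkowski's inequality for countable sums of nonnegative functions. -/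
theorem lintegral_Lp_tsum_le {α ι : Type*} [MeasurableSpace α] [Countable ι] {μ : Measure α}
    {r : ℝ} (hr : 1 ≤ r) (F : ι → α → ℝ≥0∞) (hF : ∀ i, Measurable (F i)) :
    (∫⁻ a, (∑' i, F i a) ^ r ∂μ) ^ (1 / r) ≤ ∑' i, (∫⁻ a, F i a ^ r ∂μ) ^ (1 / r) := by
  have hr0 : 0 < r := by linarith
  have key : ∫⁻ a, (∑' i, F i a) ^ r ∂μ = ⨆ s : Finset ι, ∫⁻ a, (∑ i ∈ s, F i a) ^ r ∂μ := by
    rw [← lintegral_iSup_directed]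
    · congr 1
      ext a
      rw [ENNReal.tsum_eq_iSup_sum]
      exact (ENNReal.orderIsoRpow r hr0).map_iSup _
    · intro s
      exact ((Finset.measurable_sum s fun i _ => hF i).pow_const r).aemeasurable
    · apply Monotone.directed_le
      intro s t hst a
      dsimp only
      gcongr
  rw [key, one_div, ENNReal.rpow_inv_le_iff hr0]
  refine iSup_le fun s => ?_
  rw [← ENNReal.rpow_inv_le_iff hr0, ← one_div]
  exact (lintegral_Lp_finset_sum_le hr F hF s).trans (ENNReal.sum_le_tsum s)

/-- Young's inequality `ℓ¹ * ℓ^q ⊆ ℓ^q`, with values measured in `L^p`. -/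
theorem lq_Lp_convolution_le {α : Type*} [MeasurableSpace α] {μ : Measure α} {p q : ℝ}
    (hp : 1 ≤ p) (hq : 1 ≤ q) (a : ℤ → ℝ≥0∞) (h : ℤ → α → ℝ≥0∞) (hh : ∀ m, Measurable (h m)) :
    (∑' j : ℤ, (∫⁻ x, (∑' k : ℤ, a k * h (j + k) x) ^ p ∂μ) ^ (q / p)) ^ (1 / q)
      ≤ (∑' k, a k) * (∑' j : ℤ, (∫⁻ x, h j x ^ p ∂μ) ^ (q / p)) ^ (1 / q) := by
  have hp0 : 0 < p := by linarith
  have hq0 : 0 < q := by linarith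
  have hpow : ∀ I : ℝ≥0∞, I ^ (q / p) = (I ^ (1 / p)) ^ q := fun I => by
    rw [← ENNReal.rpow_mul]; congr 1; ring
  have hsc : ∀ (r : ℝ), 0 < r → ∀ b X : ℝ≥0∞, (b ^ r * X) ^ (1 / r) = b * X ^ (1 / r) := by
    intro r hr b X
    rw [ENNReal.mul_rpow_of_nonneg _ _ (by positivity), ← ENNReal.rpow_mul,
      mul_one_div_cancel hr.ne', ENNReal.rpow_one]
  set b : ℤ → ℝ≥0∞ := fun m => (∫⁻ x, h m x ^ p ∂μ) ^ (1 / p) with hb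
  have step1 : ∀ j, (∫⁻ x, (∑' k : ℤ, a k * h (j + k) x) ^ p ∂μ) ^ (1 / p)
      ≤ ∑' k, a k * b (j + k) := by
    intro j
    refine (lintegral_Lp_tsum_le hp (fun k x => a k * h (j + k) x)
      fun k => (hh _).const_mul _).trans (ENNReal.tsum_le_tsum fun k => ?_)
    simp only [ENNReal.mul_rpow_of_nonneg _ _ hp0.le]
    rw [lintegral_const_mul _ ((hh _).pow_const p), hsc p hp0]
  have step2 := lintegral_Lp_tsum_le (μ := Measure.count) hq (fun k j : ℤ => a k * b (j + k))
    (fun k => measurable_from_top)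
  simp only [lintegral_count] at step2
  simp only [hpow]
  calc _ ≤ (∑' j : ℤ, (∑' k, a k * b (j + k)) ^ q) ^ (1 / q) := by
        gcongr with j
        exact step1 j
    _ ≤ _ := step2
    _ = _ := by
        rw [← ENNReal.tsum_mul_right]
        congr 1
        ext k
        simp only [ENNReal.mul_rpow_of_nonneg _ _ hq0.le]
        rw [ENNReal.tsum_mul_left, hsc q hq0]
        congr 2
        exact (Equiv.addRight k).tsum_eq (fun j => b j ^ q)

/-! ### Hausdorff capacity and change of aperture -/

theorem hausdorffCapacity_mono (n : ℕ) (d : ℝ) {E F : Set (En n)} (h : E ⊆ F) :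
    hausdorffCapacity n d E ≤ hausdorffCapacity n d F :=
  le_iInf₂ fun c hc => iInf₂_le c (h.trans hc)

/-- Coverings indexed by an arbitrary countable type are allowed, because for `d > 0` a family can
be padded with empty balls of radius `0` at no cost. -/
theorem hausdorffCapacity_le_tsum (n : ℕ) {d : ℝ} (hd : 0 < d) {ι : Type*} [Countable ι]
    (E : Set (En n)) (c : ι → En n × ℝ≥0)
    (hc : E ⊆ ⋃ i, Metric.ball (c i).1 ((c i).2 : ℝ)) :
    hausdorffCapacity n d E ≤ ∑' i, ((c i).2 : ℝ≥0∞) ^ d := by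
  obtain ⟨f, hf⟩ := exists_injective_nat ι
  set c' : ℕ → En n × ℝ≥0 := Function.extend f c (fun _ => (0, 0)) with hc'
  have hc'f : ∀ i, c' (f i) = c i := fun i => hf.extend_apply _ _ _
  have hsum : ∑' i, ((c i).2 : ℝ≥0∞) ^ d = ∑' k, ((c' k).2 : ℝ≥0∞) ^ d := by
    rw [← hf.tsum_eq]
    · simp only [hc'f]
    · intro k hk
      by_contra hk'
      apply hk
      have : c' k = (0, 0) := Function.extend_apply' _ _ _ (by simpa using hk')
      simp [this, hd]
  rw [hsum]
  refine iInf₂_le c' (hc.trans (iUnion_subset fun i => ?_))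
  rw [← hc'f i]
  exact subset_iUnion (fun k => Metric.ball (c' k).1 ((c' k).2 : ℝ)) (f i)

theorem hausdorffCapacity_zero (n : ℕ) (E : Set (En n)) : hausdorffCapacity n 0 E = ∞ := by
  simp only [hausdorffCapacity, ENNReal.rpow_zero]
  refine iInf₂_eq_top.2 fun c hc => ?_
  exact ENNReal.tsum_const_eq_top_of_ne_zero one_ne_zero

theorem exists_cover_of_hausdorffCapacity_lt {n : ℕ} {d : ℝ} {E : Set (En n)} {a : ℝ≥0∞}
    (h : hausdorffCapacity n d E < a) : ∃ c : ℕ → En n × ℝ≥0,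
      E ⊆ (⋃ i, Metric.ball (c i).1 ((c i).2 : ℝ)) ∧ ∑' i, ((c i).2 : ℝ≥0∞) ^ d < a := by
  simpa only [hausdorffCapacity, iInf_lt_iff, exists_prop] using h

theorem hausdorffCapacity_iUnion_le (n : ℕ) {d : ℝ} (hd : 0 < d) {ι : Type*} [Countable ι]
    (E : ι → Set (En n)) :
    hausdorffCapacity n d (⋃ i, E i) ≤ ∑' i, hausdorffCapacity n d (E i) := by
  refine ENNReal.le_of_forall_pos_le_add fun ε hε hfin => ?_
  obtain ⟨η, hη0, hη⟩ := ENNReal.exists_pos_sum_of_countable' (ENNReal.coe_pos.2 hε).ne' ι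
  have hE : ∀ i, hausdorffCapacity n d (E i) < hausdorffCapacity n d (E i) + η i := fun i =>
    ENNReal.lt_add_right (ne_top_of_le_ne_top hfin.ne (ENNReal.le_tsum i)) (hη0 i).ne'
  choose c hcE hcs using fun i => exists_cover_of_hausdorffCapacity_lt (hE i)
  calc hausdorffCapacity n d (⋃ i, E i)
      ≤ ∑' k : ι × ℕ, ((c k.1 k.2).2 : ℝ≥0∞) ^ d := by
        refine hausdorffCapacity_le_tsum n hd _ (fun k : ι × ℕ => c k.1 k.2) ?_
        refine iUnion_subset fun i => (hcE i).trans (iUnion_subset fun m => ?_)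
        exact subset_iUnion
          (fun k : ι × ℕ => Metric.ball (c k.1 k.2).1 ((c k.1 k.2).2 : ℝ)) (i, m)
    _ = ∑' i, ∑' m, ((c i m).2 : ℝ≥0∞) ^ d :=
        ENNReal.tsum_prod (f := fun i m => ((c i m).2 : ℝ≥0∞) ^ d)
    _ ≤ ∑' i, (hausdorffCapacity n d (E i) + η i) := ENNReal.tsum_le_tsum fun i => (hcs i).le
    _ ≤ _ := by rw [ENNReal.tsum_add]; gcongr

theorem volume_ball_nnreal (n : ℕ) (hn : 0 < n) (x : En n) (r : ℝ≥0) :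
    volume (Metric.ball x (r : ℝ)) = (r : ℝ≥0∞) ^ (n : ℝ) * volume (Metric.ball (0 : En n) 1) := by
  have : Nonempty (Fin n) := ⟨⟨0, hn⟩⟩
  have : Nontrivial (En n) := inferInstanceAs (Nontrivial (EuclideanSpace ℝ (Fin n)))
  have h := Measure.addHaar_ball (volume : Measure (En n)) x r.2
  refine h.trans ?_
  congr 1
  simp [ENNReal.ofReal_pow]

/-- Disjoint balls, each covered only by balls of smaller radius, have total `d`-content at most
that of the covering. The reason is that `t ^ (d - n) ≤ r ^ (d - n)` for `r ≤ t`, so that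
`t ^ d` is dominated by a sum of `r ^ (d - n)` times Lebesgue measures, which are additive. -/
theorem tsum_disjoint_balls_le (n : ℕ) (hn : 0 < n) {d : ℝ} (hdn : d ≤ n)
    (c : ℕ → En n × ℝ≥0) (u : Set (En n × ℝ≥0)) (hu : u.Countable)
    (hpos : ∀ b ∈ u, 0 < b.2)
    (hdisj : u.PairwiseDisjoint fun b => Metric.ball b.1 (b.2 : ℝ))
    (hcov : ∀ b ∈ u, Metric.ball b.1 (b.2 : ℝ) ⊆ ⋃ i, Metric.ball (c i).1 ((c i).2 : ℝ))
    (hsmall : ∀ b ∈ u, ∀ i,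
      (Metric.ball b.1 (b.2 : ℝ) ∩ Metric.ball (c i).1 ((c i).2 : ℝ)).Nonempty → (c i).2 ≤ b.2) :
    ∑' b : u, (b.1.2 : ℝ≥0∞) ^ d ≤ ∑' i, ((c i).2 : ℝ≥0∞) ^ d := by
  have := hu.to_subtype
  set V := volume (Metric.ball (0 : En n) 1) with hV
  have hV0 : V ≠ 0 := (Metric.measure_ball_pos _ _ one_pos).ne'
  have hVt : V ≠ ∞ := measure_ball_lt_top.ne
  rw [← ENNReal.mul_le_mul_iff_left hV0 hVt, ← ENNReal.tsum_mul_right, ← ENNReal.tsum_mul_right]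
  have h1 : ∀ b : u, (b.1.2 : ℝ≥0∞) ^ d * V ≤ ∑' i, ((c i).2 : ℝ≥0∞) ^ (d - n) *
      volume (Metric.ball b.1.1 (b.1.2 : ℝ) ∩ Metric.ball (c i).1 ((c i).2 : ℝ)) := by
    rintro ⟨b, hb⟩
    have hb0 : (b.2 : ℝ≥0∞) ≠ 0 := by simpa using (hpos b hb).ne'
    calc (b.2 : ℝ≥0∞) ^ d * V = (b.2 : ℝ≥0∞) ^ (d - n) * volume (Metric.ball b.1 (b.2 : ℝ)) := by
          rw [volume_ball_nnreal n hn, ← mul_assoc, ← ENNReal.rpow_add _ _ hb0 (by simp)]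
          simp [hV]
      _ ≤ (b.2 : ℝ≥0∞) ^ (d - n) * ∑' i, volume
            (Metric.ball b.1 (b.2 : ℝ) ∩ Metric.ball (c i).1 ((c i).2 : ℝ)) := by
          gcongr
          refine le_trans (measure_mono ?_) (measure_iUnion_le _)
          rw [← inter_iUnion]
          exact subset_inter subset_rfl (hcov b hb)
      _ ≤ _ := by
          rw [← ENNReal.tsum_mul_left]
          refine ENNReal.tsum_le_tsum fun i => ?_
          rcases (Metric.ball b.1 (b.2 : ℝ) ∩ Metric.ball (c i).1 ((c i).2 : ℝ)).eq_empty_or_nonempty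
            with h | h
          · simp [h]
          · gcongr ?_ * _
            rw [← neg_sub, ENNReal.rpow_neg, ENNReal.rpow_neg, ENNReal.inv_le_inv]
            exact ENNReal.rpow_le_rpow (by exact_mod_cast hsmall b hb i h) (by linarith)
  refine (ENNReal.tsum_le_tsum h1).trans ?_
  rw [ENNReal.tsum_comm]
  refine ENNReal.tsum_le_tsum fun i => ?_
  rw [ENNReal.tsum_mul_left]
  have h2 : ∑' b : u, volume (Metric.ball b.1.1 (b.1.2 : ℝ) ∩ Metric.ball (c i).1 ((c i).2 : ℝ))
      ≤ volume (Metric.ball (c i).1 ((c i).2 : ℝ)) := by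
    rw [← measure_iUnion]
    · exact measure_mono (iUnion_subset fun _ => inter_subset_right)
    · intro a b hab
      exact (hdisj a.2 b.2 (fun h => hab (Subtype.ext h))).mono inter_subset_left inter_subset_left
    · exact fun _ => measurableSet_ball.inter measurableSet_ball
  refine (mul_le_mul_right h2 _).trans ?_
  rcases eq_or_ne (c i).2 0 with h0 | h0
  · simp [h0]
  · rw [volume_ball_nnreal n hn, ← mul_assoc, ← ENNReal.rpow_add _ _ (by simpa using h0) (by simp)]
    simp [hV]

/-- Change of aperture for the superlevel sets of the nontangential maximal function. A ball
`B(y, t)` on which `Nω > a` either meets a covering ball of larger radius, whose enlargement then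
contains `B(y, β t)`, or is covered by balls of radius at most `t`; balls of the second kind are
thinned out by Vitali's lemma and their content is controlled by `tsum_disjoint_balls_le`. -/
theorem hausdorffCapacity_ntMaximal_le (n : ℕ) (hn : 0 < n) {d : ℝ} (hd : 0 < d) (hdn : d ≤ n)
    (β : ℝ≥0) (hβ : 1 ≤ β) (ω : En n → ℝ → ℝ≥0∞) (a : ℝ≥0∞) :
    hausdorffCapacity n d {x | a < ntMaximal n β ω x}
      ≤ 2 * (5 * β : ℝ≥0∞) ^ d * hausdorffCapacity n d {x | a < ntMaximal n 1 ω x} := by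
  have hβ' : β ≠ 0 := (zero_lt_one.trans_le hβ).ne'
  have hβr : (1 : ℝ) ≤ β := by exact_mod_cast hβ
  have hK0 : 2 * (5 * β : ℝ≥0∞) ^ d ≠ 0 := by
    simp [ENNReal.rpow_eq_zero_iff, hβ', ENNReal.mul_eq_top]
  have hKt : 2 * (5 * β : ℝ≥0∞) ^ d ≠ ∞ := by
    refine ENNReal.mul_ne_top (by simp) (ENNReal.rpow_ne_top_of_nonneg hd.le ?_)
    exact ENNReal.mul_ne_top (by simp) (by simp)
  rw [mul_comm _ (hausdorffCapacity n d _), ← ENNReal.div_le_iff_le_mul (Or.inl hK0) (Or.inl hKt)]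
  refine le_iInf₂ fun c hc => ?_
  rw [ENNReal.div_le_iff_le_mul (Or.inl hK0) (Or.inl hKt)]
  set S := ∑' i, ((c i).2 : ℝ≥0∞) ^ d with hS
  rcases eq_or_ne S ∞ with hSt | hSt
  · rw [hSt, ENNReal.top_mul hK0]; exact le_top
  -- `T` is the family of balls in `{Nω > a}` that only meet covering balls of smaller radius.
  set T : Set (En n × ℝ≥0) := {b | a < ω b.1 b.2 ∧ 0 < b.2 ∧ ∀ i,
    (Metric.ball b.1 (b.2 : ℝ) ∩ Metric.ball (c i).1 ((c i).2 : ℝ)).Nonempty → (c i).2 ≤ b.2}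
    with hT
  have hcov : ∀ b : En n × ℝ≥0, a < ω b.1 b.2 →
      Metric.ball b.1 (b.2 : ℝ) ⊆ ⋃ i, Metric.ball (c i).1 ((c i).2 : ℝ) := by
    intro b hb z hz
    apply hc
    refine hb.trans_le ?_
    rw [Metric.mem_ball, dist_comm] at hz
    exact le_iSup_of_le b.1 (le_iSup₂_of_le (b.2 : ℝ) (by rwa [one_mul]) le_rfl)
  have hbound : ∀ b ∈ T, (b.2 : ℝ) ≤ (S ^ (1 / d)).toReal := by
    intro b hb
    have h := tsum_disjoint_balls_le n hn hdn c {b} (countable_singleton b)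
      (by rintro _ rfl; exact hb.2.1) (pairwiseDisjoint_singleton _ _)
      (by rintro _ rfl; exact hcov _ hb.1) (by rintro _ rfl; exact hb.2.2)
    rw [tsum_singleton b (fun b => (b.2 : ℝ≥0∞) ^ d)] at h
    rw [← ENNReal.le_rpow_inv_iff hd, ← one_div] at h
    have h' := ENNReal.toReal_mono (ENNReal.rpow_ne_top_of_nonneg (by positivity) hSt) h
    simpa using h'
  obtain ⟨u, huT, hdisj, hu⟩ := Vitali.exists_disjoint_subfamily_covering_enlargement
    (fun b : En n × ℝ≥0 => Metric.ball b.1 (b.2 : ℝ)) T (fun b => (b.2 : ℝ)) 2 one_lt_two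
    (fun b _ => b.2.2) _ hbound
    (fun b hb => Metric.nonempty_ball.2 (by exact_mod_cast hb.2.1))
  have hucount : u.Countable := hdisj.countable_of_isOpen (fun _ _ => Metric.isOpen_ball)
    (fun b hb => Metric.nonempty_ball.2 (by exact_mod_cast (huT hb).2.1))
  have := hucount.to_subtype
  have huS : ∑' b : u, (b.1.2 : ℝ≥0∞) ^ d ≤ S :=
    tsum_disjoint_balls_le n hn hdn c u hucount (fun b hb => (huT hb).2.1) hdisj
      (fun b hb => hcov b (huT hb).1) (fun b hb => (huT hb).2.2)
  have hcover := hausdorffCapacity_le_tsum n hd {x | a < ntMaximal n β ω x}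
    (Sum.elim (fun i : ℕ => ((c i).1, 5 * β * (c i).2))
      (fun b : u => (b.1.1, 5 * β * b.1.2)) : ℕ ⊕ u → En n × ℝ≥0) ?_
  · refine hcover.trans ?_
    rw [ENNReal.summable.tsum_sum ENNReal.summable]
    simp only [Sum.elim_inl, Sum.elim_inr, ENNReal.coe_mul, ENNReal.mul_rpow_of_nonneg _ _ hd.le,
      ENNReal.coe_ofNat]
    rw [ENNReal.tsum_mul_left, ENNReal.tsum_mul_left, ← hS]
    calc _ ≤ (5 : ℝ≥0∞) ^ d * (β : ℝ≥0∞) ^ d * S + (5 : ℝ≥0∞) ^ d * (β : ℝ≥0∞) ^ d * S := by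
          gcongr
      _ = _ := by ring
  · intro x hx
    simp only [mem_ofPred_eq, ntMaximal, lt_iSup_iff] at hx
    obtain ⟨y, t, hyt, hat⟩ := hx
    have ht : 0 < t := by
      by_contra! h
      have : (β : ℝ) * t ≤ 0 := mul_nonpos_of_nonneg_of_nonpos (by positivity) h
      linarith [dist_nonneg (x := y) (y := x)]
    lift t to ℝ≥0 using ht.le
    by_cases hyT : (y, t) ∈ T
    · obtain ⟨b, hbu, ⟨z, hz1, hz2⟩, htb⟩ := hu _ hyT
      refine mem_iUnion.2 ⟨Sum.inr ⟨b, hbu⟩, ?_⟩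
      simp only [Sum.elim_inr, Metric.mem_ball, NNReal.coe_mul, NNReal.coe_ofNat] at hz1 hz2 htb ⊢
      have h1 := dist_triangle4 x y z b.1
      rw [dist_comm x y, dist_comm y z] at h1
      have hb0 : (0 : ℝ) ≤ b.2 := b.2.2
      nlinarith [mul_le_mul_of_nonneg_left htb (zero_le_one.trans hβr),
        mul_nonneg (sub_nonneg.2 hβr) hb0]
    · have : ∃ i, (Metric.ball y (t : ℝ) ∩ Metric.ball (c i).1 ((c i).2 : ℝ)).Nonempty ∧
          t < (c i).2 := by
        by_contra! h
        exact hyT ⟨hat, by exact_mod_cast ht, h⟩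
      obtain ⟨i, ⟨z, hz1, hz2⟩, hti⟩ := this
      have hti' : (t : ℝ) < (c i).2 := by exact_mod_cast hti
      refine mem_iUnion.2 ⟨Sum.inl i, ?_⟩
      simp only [Sum.elim_inl, Metric.mem_ball, NNReal.coe_mul, NNReal.coe_ofNat] at hz1 hz2 ⊢
      have h1 := dist_triangle4 x y z (c i).1
      rw [dist_comm x y, dist_comm y z] at h1
      have hb0 : (0 : ℝ) ≤ (c i).2 := (c i).2.2
      nlinarith [mul_le_mul_of_nonneg_left hti'.le (zero_le_one.trans hβr),
        mul_nonneg (sub_nonneg.2 hβr) hb0]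

/-! ### Choquet integrals -/

theorem measurable_hausdorffCapacity_superlevel (n : ℕ) (d : ℝ) (f : En n → ℝ≥0∞) :
    Measurable fun lam : ℝ => hausdorffCapacity n d {x | ENNReal.ofReal lam < f x} := by
  refine Antitone.measurable fun s t hst => hausdorffCapacity_mono n d fun x hx => ?_
  exact (ENNReal.ofReal_le_ofReal hst).trans_lt hx

theorem choquetIntegral_const_mul (n : ℕ) (d : ℝ) (c : ℝ) (hc : 0 < c) (f : En n → ℝ≥0∞) :
    choquetIntegral n d (fun x => ENNReal.ofReal c * f x)
      = ENNReal.ofReal c * choquetIntegral n d f := by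
  set φ : ℝ → ℝ≥0∞ := fun lam => hausdorffCapacity n d {x | ENNReal.ofReal lam < f x} with hφ
  have hset : ∀ lam : ℝ, {x | ENNReal.ofReal lam < ENNReal.ofReal c * f x}
      = {x | ENNReal.ofReal (c⁻¹ * lam) < f x} := by
    intro lam
    ext x
    have hc0 : ENNReal.ofReal c ≠ 0 := by simpa using hc
    simp only [mem_ofPred_eq]
    rw [ENNReal.ofReal_mul (by positivity), ENNReal.ofReal_inv_of_pos hc, mul_comm _⁻¹,
      ← div_eq_mul_inv, ENNReal.div_lt_iff (Or.inl hc0) (Or.inl ENNReal.ofReal_ne_top), mul_comm]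
  have hφm : Measurable φ := measurable_hausdorffCapacity_superlevel n d f
  have hind : ∀ lam : ℝ, (Ioi (0:ℝ)).indicator (fun lam => φ (c⁻¹ * lam)) lam
      = (Ioi (0:ℝ)).indicator φ (c⁻¹ * lam) := by
    intro lam
    by_cases h : 0 < lam
    · rw [indicator_of_mem (mem_Ioi.2 h), indicator_of_mem (mem_Ioi.2 (by positivity))]
    · rw [indicator_of_notMem (by simpa using h), indicator_of_notMem]
      have : c⁻¹ * lam ≤ 0 := mul_nonpos_of_nonneg_of_nonpos (by positivity) (not_lt.1 h)
      simpa using this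
  unfold choquetIntegral
  simp only [hset]
  change ∫⁻ lam in Ioi (0:ℝ), φ (c⁻¹ * lam) = _ * ∫⁻ lam in Ioi (0:ℝ), φ lam
  rw [← lintegral_indicator measurableSet_Ioi, ← lintegral_indicator measurableSet_Ioi]
  simp only [hind]
  rw [← lintegral_map (hφm.indicator measurableSet_Ioi) (measurable_const_mul c⁻¹),
    Real.map_volume_mul_left (inv_ne_zero hc.ne'), lintegral_smul_measure, inv_inv, abs_of_pos hc]
  rfl

theorem choquetIntegral_le_tsum (n : ℕ) {d : ℝ} (hd : 0 < d) {ι : Type*} [Countable ι]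
    (f : En n → ℝ≥0∞) (F : ι → En n → ℝ≥0∞) (h : ∀ x, f x ≤ ⨆ i, F i x) :
    choquetIntegral n d f ≤ ∑' i, choquetIntegral n d (F i) := by
  unfold choquetIntegral
  rw [← lintegral_tsum fun i => (measurable_hausdorffCapacity_superlevel n d (F i)).aemeasurable]
  refine lintegral_mono fun lam => ?_
  refine (hausdorffCapacity_mono n d fun x hx => ?_).trans (hausdorffCapacity_iUnion_le n hd _)
  simpa [lt_iSup_iff] using lt_of_lt_of_le hx (h x)

/-- Change of aperture for Choquet integrals of nontangential maximal functions. -/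
theorem choquetIntegral_ntMaximal_le (n : ℕ) (hn : 0 < n) {d : ℝ} (hd : 0 < d) (hdn : d ≤ n)
    {e : ℝ} (he : 0 < e) (β : ℝ≥0) (hβ : 1 ≤ β) (ω : En n → ℝ → ℝ≥0∞) :
    choquetIntegral n d (fun x => ntMaximal n β ω x ^ e)
      ≤ 2 * (5 * β : ℝ≥0∞) ^ d * choquetIntegral n d (fun x => ntMaximal n 1 ω x ^ e) := by
  unfold choquetIntegral
  rw [← lintegral_const_mul _ (measurable_hausdorffCapacity_superlevel n d _)]
  refine lintegral_mono fun lam => ?_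
  have h := hausdorffCapacity_ntMaximal_le n hn hd hdn β hβ ω (ENNReal.ofReal lam ^ (1 / e))
  simpa only [one_div, ENNReal.rpow_inv_lt_iff he] using h

/-! ### The smeared weight -/

theorem tsum_two_rpow_neg_abs_ne_top {s : ℝ} (hs : 0 < s) :
    ∑' k : ℤ, (2 : ℝ≥0∞) ^ (-(|(k : ℝ)| * s)) ≠ ∞ := by
  have key : ∑' k : ℕ, (2 : ℝ≥0∞) ^ (-((k : ℝ) * s)) ≠ ∞ := by
    have : ∀ k : ℕ, (2 : ℝ≥0∞) ^ (-((k : ℝ) * s)) = ((2 : ℝ≥0∞) ^ (-s)) ^ k := fun k => by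
      rw [← ENNReal.rpow_natCast, ← ENNReal.rpow_mul]; congr 1; ring
    simp only [this, ENNReal.tsum_geometric]
    simp only [ne_eq, ENNReal.inv_eq_top, tsub_eq_zero_iff_le, not_le]
    exact ENNReal.rpow_lt_one_of_one_lt_of_neg (by norm_num) (by linarith)
  rw [tsum_of_nat_of_neg_add_one ENNReal.summable ENNReal.summable]
  refine ENNReal.add_ne_top.2 ⟨by simpa using key, ?_⟩
  refine ne_top_of_le_ne_top key (ENNReal.tsum_le_tsum fun k => ?_)
  refine ENNReal.rpow_le_rpow_of_exponent_le (by norm_num) ?_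
  push_cast
  rw [abs_neg, abs_of_nonneg (by positivity)]
  nlinarith

/-- The weight `ω` smeared over all dyadic rescalings of `t`, with geometric decay `2 ^ (-|k| ε)`
and normalizing factor `c`. -/
def smearedWeight (n : ℕ) (c : ℝ≥0∞) (ε : ℝ) (ω : En n → ℝ → ℝ≥0∞) : En n → ℝ → ℝ≥0∞ :=
  fun x t => ⨆ k : ℤ, c * (2 : ℝ≥0∞) ^ (-(|(k : ℝ)| * ε)) * ω x ((2 : ℝ) ^ k * t)

theorem measurable_smearedWeight (n : ℕ) (c : ℝ≥0∞) (ε : ℝ) {ω : En n → ℝ → ℝ≥0∞}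
    (hω : Measurable (Function.uncurry ω)) :
    Measurable (Function.uncurry (smearedWeight n c ε ω)) := by
  refine Measurable.iSup fun k => Measurable.const_mul ?_ _
  exact hω.comp (measurable_fst.prodMk (measurable_snd.const_mul _))

theorem two_rpow_ne_zero (s : ℝ) : (2 : ℝ≥0∞) ^ s ≠ 0 := by
  simp [ENNReal.rpow_eq_zero_iff]

theorem two_rpow_ne_top (s : ℝ) : (2 : ℝ≥0∞) ^ s ≠ ∞ := by
  simp [ENNReal.rpow_eq_top_iff]

/-- A shift of the scale by `2 ^ k` is absorbed by widening the aperture to `2 ^ |k|`. -/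
theorem ntMaximal_smearedWeight_le (n : ℕ) (c : ℝ≥0∞) (ε : ℝ) (ω : En n → ℝ → ℝ≥0∞) (x : En n) :
    ntMaximal n 1 (smearedWeight n c ε ω) x ≤ ⨆ k : ℤ, c * (2 : ℝ≥0∞) ^ (-(|(k : ℝ)| * ε)) *
      ntMaximal n ((2 : ℝ≥0) ^ k.natAbs : ℝ≥0) ω x := by
  refine iSup_le fun y => iSup₂_le fun t ht => iSup_mono fun k => ?_
  gcongr
  refine le_iSup_of_le y (le_iSup₂_of_le _ ?_ le_rfl)
  have ht0 : 0 < t := by linarith [dist_nonneg (x := y) (y := x)]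
  refine ht.trans_le ?_
  rw [← mul_assoc]
  gcongr
  push_cast
  rw [← zpow_natCast, ← zpow_add₀ two_ne_zero]
  exact one_le_zpow₀ one_le_two (by omega)

theorem choquetIntegral_smearedWeight_le (n : ℕ) (hn : 0 < n) {d e ε : ℝ} (hd : 0 < d)
    (hdn : d ≤ n) (he : 0 < e) {c : ℝ≥0∞} (hc0 : c ≠ 0) (hct : c ≠ ∞) (ω : En n → ℝ → ℝ≥0∞) :
    choquetIntegral n d (fun x => ntMaximal n 1 (smearedWeight n c ε ω) x ^ e)
      ≤ c ^ e * (∑' k : ℤ, 2 * 5 ^ d * (2 : ℝ≥0∞) ^ (-(|(k : ℝ)| * (ε * e - d)))) *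
        choquetIntegral n d (fun x => ntMaximal n 1 ω x ^ e) := by
  have hsup : ∀ x, ntMaximal n 1 (smearedWeight n c ε ω) x ^ e ≤
      ⨆ k : ℤ, (c * (2 : ℝ≥0∞) ^ (-(|(k : ℝ)| * ε))) ^ e *
        ntMaximal n ((2 : ℝ≥0) ^ k.natAbs : ℝ≥0) ω x ^ e := by
    intro x
    refine (ENNReal.rpow_le_rpow (ntMaximal_smearedWeight_le n c ε ω x) he.le).trans ?_
    refine ((ENNReal.orderIsoRpow e he).map_iSup _).le.trans (iSup_mono fun k => ?_)
    exact (ENNReal.mul_rpow_of_nonneg _ _ he.le).le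
  refine (choquetIntegral_le_tsum n hd _ _ hsup).trans ?_
  rw [← ENNReal.tsum_mul_left, ← ENNReal.tsum_mul_right]
  refine ENNReal.tsum_le_tsum fun k => ?_
  have hA0 : (c * (2 : ℝ≥0∞) ^ (-(|(k : ℝ)| * ε))) ^ e ≠ 0 := by
    simp [ENNReal.rpow_eq_zero_iff, hc0, he, not_lt.2 he.le]
  have hAt : (c * (2 : ℝ≥0∞) ^ (-(|(k : ℝ)| * ε))) ^ e ≠ ∞ :=
    ENNReal.rpow_ne_top_of_nonneg he.le (ENNReal.mul_ne_top hct (two_rpow_ne_top _))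
  have hconst := choquetIntegral_const_mul n d _ (ENNReal.toReal_pos hA0 hAt)
    (fun x => ntMaximal n ((2 : ℝ≥0) ^ k.natAbs : ℝ≥0) ω x ^ e)
  rw [ENNReal.ofReal_toReal hAt] at hconst
  rw [hconst]
  refine (mul_le_mul_right (choquetIntegral_ntMaximal_le n hn hd hdn he _
    (one_le_pow₀ one_le_two) ω) _).trans (le_of_eq ?_)
  have hpow : ((((2 : ℝ≥0) ^ k.natAbs : ℝ≥0) : ℝ≥0∞)) ^ d = (2 : ℝ≥0∞) ^ (|(k : ℝ)| * d) := by
    push_cast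
    rw [← ENNReal.rpow_natCast, ← ENNReal.rpow_mul, Nat.cast_natAbs, Int.cast_abs]
  have hexp : (2 : ℝ≥0∞) ^ (-(|(k : ℝ)| * (ε * e - d)))
      = (2 : ℝ≥0∞) ^ (-(|(k : ℝ)| * ε) * e) * (2 : ℝ≥0∞) ^ (|(k : ℝ)| * d) := by
    rw [← ENNReal.rpow_add _ _ two_ne_zero (by simp)]
    congr 1
    ring
  rw [ENNReal.mul_rpow_of_nonneg _ _ he.le, ENNReal.mul_rpow_of_nonneg _ _ hd.le, hpow, hexp,
    ← ENNReal.rpow_mul]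
  ring

theorem tildeLqLpNorm_zero (n : ℕ) (p q : ℝ) (g : ℤ → En n → ℝ≥0∞) :
    tildeLqLpNorm n p q 0 g = ∞ := by
  refine iInf₂_eq_top.2 fun ω _ => iInf₂_eq_top.2 fun hω _ => ?_
  simp [isAdmissibleWeight, choquetIntegral, hausdorffCapacity_zero] at hω

/-- Dividing by the smeared weight trades the decay rate `δ` for `δ - ε`. -/
theorem tsum_mul_inv_smearedWeight_le (n : ℕ) {c : ℝ≥0∞} (hc0 : c ≠ 0) (hct : c ≠ ∞) (ε δ : ℝ)
    (ω : En n → ℝ → ℝ≥0∞) (g : ℤ → En n → ℝ≥0∞) (j : ℤ) (x : En n) :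
    (∑' m : ℤ, (2:ℝ≥0∞) ^ (-(|(m:ℝ) - (j:ℝ)|) * δ) * g m x) *
        (smearedWeight n c ε ω x ((2:ℝ) ^ (-j)))⁻¹
      ≤ ∑' k : ℤ, (c⁻¹ * (2 : ℝ≥0∞) ^ (-(|(k : ℝ)| * (δ - ε)))) *
        (g (j + k) x * (ω x ((2:ℝ) ^ (-(j + k))))⁻¹) := by
  rw [← (Equiv.addLeft j).tsum_eq, ← ENNReal.tsum_mul_right]
  refine ENNReal.tsum_le_tsum fun k => ?_
  have hle : c * (2 : ℝ≥0∞) ^ (-(|(k : ℝ)| * ε)) * ω x ((2:ℝ) ^ (-(j + k)))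
      ≤ smearedWeight n c ε ω x ((2:ℝ) ^ (-j)) := by
    refine le_iSup_of_le (-k) (le_of_eq ?_)
    rw [← zpow_add₀ two_ne_zero]
    simp [add_comm]
  have hinv := ENNReal.inv_le_inv.2 hle
  have hA0 : c * (2 : ℝ≥0∞) ^ (-(|(k : ℝ)| * ε)) ≠ 0 := mul_ne_zero hc0 (two_rpow_ne_zero _)
  have hAt : c * (2 : ℝ≥0∞) ^ (-(|(k : ℝ)| * ε)) ≠ ∞ := ENNReal.mul_ne_top hct (two_rpow_ne_top _)
  rw [ENNReal.mul_inv (Or.inl hA0) (Or.inl hAt), ENNReal.mul_inv (Or.inl hc0) (Or.inl hct),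
    ← ENNReal.rpow_neg, neg_neg] at hinv
  refine (mul_le_mul_right hinv _).trans (le_of_eq ?_)
  have hexp : (2 : ℝ≥0∞) ^ (-(|(k : ℝ)| * (δ - ε)))
      = (2 : ℝ≥0∞) ^ (-|(k : ℝ)| * δ) * (2 : ℝ≥0∞) ^ (|(k : ℝ)| * ε) := by
    rw [← ENNReal.rpow_add _ _ two_ne_zero (by simp)]
    congr 1
    ring
  rw [hexp]
  simp only [Equiv.coe_addLeft, Int.cast_add, add_sub_cancel_left]
  ring

/-! ### The convolution estimate -/

theorem stmt2 (n : ℕ) (hn : 0 < n) (p q τ δ : ℝ)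
    (hp : 1 < p) (hq : 1 ≤ q)
    (hτ0 : 0 ≤ τ) (hτ : τ ≤ 1 / conjExp (max p q)) (hδ : (n : ℝ) * τ < δ) :
    ∃ C : ℝ≥0∞, 0 < C ∧ C < ∞ ∧ ∀ g : ℤ → En n → ℝ≥0∞,
      (∀ m, Measurable (g m)) →
      tildeLqLpNorm n p q τ
          (fun j x => ∑' m : ℤ, (2:ℝ≥0∞) ^ (-(|(m:ℝ) - (j:ℝ)|) * δ) * g m x)
        ≤ C * tildeLqLpNorm n p q τ g := by
  -- For `τ = 0` the capacity of every set is infinite, as `r ^ 0 = 1` also for `r = 0`; there are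
  -- no admissible weights and both quasi-norms are infinite.
  rcases hτ0.eq_or_lt with rfl | hτpos
  · exact ⟨1, one_pos, ENNReal.one_lt_top, fun g _ => by simp [tildeLqLpNorm_zero]⟩
  set e := conjExp (max p q) with he_def
  have he : 0 < e := by
    have hM : 1 < max p q := lt_max_of_lt_left hp
    exact div_pos (by linarith) (by linarith)
  have hn' : (0 : ℝ) < n := by exact_mod_cast hn
  set d : ℝ := n * τ * e with hd_def
  have hd : 0 < d := by positivity
  have hdn : d ≤ n := by
    have h1 : τ * e ≤ 1 := (le_div_iff₀ he).1 hτ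
    rw [hd_def, mul_assoc]
    exact mul_le_of_le_one_right hn'.le h1
  -- A decay rate strictly between `nτ` and `δ`.
  obtain ⟨ε, hε1, hε2⟩ := exists_between hδ
  have hεd : 0 < ε * e - d := by
    rw [hd_def, ← sub_mul]
    exact mul_pos (by linarith) he
  set K : ℝ≥0∞ := ∑' k : ℤ, 2 * 5 ^ d * (2 : ℝ≥0∞) ^ (-(|(k : ℝ)| * (ε * e - d))) with hK
  have h5 : (5 : ℝ≥0∞) ^ d ≠ 0 := by simp [ENNReal.rpow_eq_zero_iff]
  have h5t : (5 : ℝ≥0∞) ^ d ≠ ∞ := ENNReal.rpow_ne_top_of_nonneg hd.le (by simp)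
  have hK0 : K ≠ 0 := by
    rw [hK, ne_eq, ENNReal.tsum_eq_zero]
    intro h
    simpa [h5] using h 0
  have hKt : K ≠ ∞ := by
    rw [hK, ENNReal.tsum_mul_left]
    exact ENNReal.mul_ne_top (ENNReal.mul_ne_top (by simp) h5t) (tsum_two_rpow_neg_abs_ne_top hεd)
  -- The normalization making the smeared weight admissible.
  set c : ℝ≥0∞ := K⁻¹ ^ (1 / e) with hc
  have hce : c ^ e * K = 1 := by
    rw [hc, ← ENNReal.rpow_mul, one_div_mul_cancel he.ne', ENNReal.rpow_one,
      ENNReal.inv_mul_cancel hK0 hKt]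
  have hc0 : c ≠ 0 := by
    intro h
    simp [h, he] at hce
  have hct : c ≠ ∞ := ENNReal.rpow_ne_top_of_nonneg (by positivity) (ENNReal.inv_ne_top.2 hK0)
  set a : ℤ → ℝ≥0∞ := fun k => c⁻¹ * (2 : ℝ≥0∞) ^ (-(|(k : ℝ)| * (δ - ε))) with ha
  have hC0 : ∑' k, a k ≠ 0 := by
    rw [ne_eq, ENNReal.tsum_eq_zero]
    intro h
    simpa [ha, hct] using h 0
  have hCt : ∑' k, a k ≠ ∞ := by
    rw [ha, ENNReal.tsum_mul_left]
    exact ENNReal.mul_ne_top (ENNReal.inv_ne_top.2 hc0)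
      (tsum_two_rpow_neg_abs_ne_top (by linarith))
  refine ⟨∑' k, a k, pos_iff_ne_zero.2 hC0, hCt.lt_top, fun g hg => ?_⟩
  rw [mul_comm, ← ENNReal.div_le_iff_le_mul (Or.inl hC0) (Or.inl hCt)]
  refine le_iInf₂ fun ω hω => le_iInf₂ fun hadm hvan => ?_
  rw [ENNReal.div_le_iff_le_mul (Or.inl hC0) (Or.inl hCt), mul_comm]
  have hadm' : isAdmissibleWeight n τ e (smearedWeight n c ε ω) := by
    refine (choquetIntegral_smearedWeight_le n hn hd hdn he hc0 hct ω).trans ?_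
    rw [hce, one_mul]
    exact hadm
  have hvan' : ∀ (j : ℤ) (x : En n), smearedWeight n c ε ω x ((2:ℝ) ^ (-j)) = 0 →
      ∑' m : ℤ, (2:ℝ≥0∞) ^ (-(|(m:ℝ) - (j:ℝ)|) * δ) * g m x = 0 := by
    intro j x h
    refine ENNReal.tsum_eq_zero.2 fun m => ?_
    have h0 := ENNReal.iSup_eq_zero.1 h (j - m)
    rw [← zpow_add₀ two_ne_zero, show j - m + -j = -m by ring] at h0
    rw [hvan m x (by simpa [hc0, two_rpow_ne_zero] using h0), mul_zero]
  refine (iInf₂_le (smearedWeight n c ε ω) (measurable_smearedWeight n c ε hω)).trans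
    ((iInf₂_le hadm' hvan').trans ?_)
  have hp0 : 0 < p := by linarith
  have hq0 : 0 < q := by linarith
  have hfactor : ∀ u v : ℝ≥0∞, u ^ p * v ^ (-p) = (u * v⁻¹) ^ p := fun u v => by
    rw [ENNReal.mul_rpow_of_nonneg _ _ hp0.le, ENNReal.rpow_neg, ENNReal.inv_rpow]
  simp only [hfactor]
  refine le_trans ?_ (lq_Lp_convolution_le hp.le hq a
    (fun m x => g m x * (ω x ((2:ℝ) ^ (-m)))⁻¹) fun m => (hg m).mul
      (hω.comp (measurable_id.prodMk measurable_const)).inv)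
  gcongr with j x
  exact tsum_mul_inv_smearedWeight_le n hc0 hct ε δ ω g j x
end
end
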